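/- arXiv:1511.05910 — 4 statements merged into one kernel-verified Lean document; each statement's English description precedes it below -/
import Mathlib

section
/- (Estimates (5.27) and (5.28)) Let u : Θ → ℝ be bounded, n ≥ 1, and let 0 = s_1 < ⋯ < s_i ≤ T, x_1,…,x_{i−1}, x ∈ ℝ^d with x_i := (x_1,…,x_{i−1},x), and s ∈ [s_i, T] with s > 0. Let (θ̃, ℓ̃), with θ̃ = (t̃, ω̃), be 1-optimal in the definition of u^n(s, η^{λ_i}(x)), and let ℓ̃^{−1} denote the inverse of the bijection ℓ̃|_{[0,t̃]} : [0,t̃] → [0,s]. Then there exists a constant C, depending only on T, p and ‖u‖_∞, such that: |t̃ − ℓ̃^{−1}(s_i)| ≤ C n^{−(3p+3)/2} + |s − s_i|, and ∫_{ℓ̃^{−1}(s_i)}^{t̃} |x_i·1 − ω̃_t|^p dt ≤ C n^{−p/(p+1)} ( n^{−(3p+3)/2} + |s − s_i| )^{1/(p+1)}. -/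
open MeasureTheory Set Filter Topology

noncomputable section

/-- `ℝ^d` with the Euclidean norm. -/
abbrev E (d : ℕ) := EuclideanSpace ℝ (Fin d)

/-- A point `θ = (t, ω)` of `Θ = [0,T] × Ω`, where `Ω` is the set of continuous
paths `[0,T] → ℝ^d` starting from the origin. -/
structure Theta (T : ℝ) (d : ℕ) where
  t : ℝ
  path : ℝ → E d
  ht : t ∈ Set.Icc 0 T
  cont : ContinuousOn path (Set.Icc 0 T)
  init : path 0 = 0

/-- `‖f‖_q^q := ‖f T‖^q + ∫_0^T ‖f s‖^q ds`. -/
def pnormPow (T q : ℝ) {d : ℕ} (f : ℝ → E d) : ℝ :=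
  ‖f T‖ ^ q + ∫ s in (0:ℝ)..T, ‖f s‖ ^ q

/-- `‖f‖_q := (‖f T‖^q + ∫_0^T ‖f s‖^q ds)^(1/q)`. -/
def pnorm (T q : ℝ) {d : ℕ} (f : ℝ → E d) : ℝ := (pnormPow T q f) ^ (1 / q)

/-- The pseudo-distance `d_p(θ,θ') = |t - t'| + ‖ω_{t∧·} - ω'_{t'∧·}‖_p`. -/
def dpDist (T p : ℝ) {d : ℕ} (θ θ' : Theta T d) : ℝ :=
  |θ.t - θ'.t| + pnorm T p (fun s => θ.path (min θ.t s) - θ'.path (min θ'.t s))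

/-- The set `𝓛_{t,s}` of monotone time changes: for `s > 0`, nondecreasing
`ℓ : [0,T] → ℝ` restricting to an increasing bijection from `[0,t]` onto `[0,s]`
with `ℓ(r) = r - t + s` on `(t,T]`; for `s = 0` the single function `ℓ^{t,0}`. -/
def LL (T t s : ℝ) : Set (ℝ → ℝ) :=
  if s = 0 then {fun r => if r ≤ t then 0 else r - t}
  else {ℓ | MonotoneOn ℓ (Set.Icc 0 T) ∧ StrictMonoOn ℓ (Set.Icc 0 t) ∧
        Set.BijOn ℓ (Set.Icc 0 t) (Set.Icc 0 s) ∧ ∀ r ∈ Set.Ioc t T, ℓ r = r - t + s}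

/-- `‖ℓ - I‖_∞ := sup_{0 ≤ r ≤ T} |ℓ(r) - r|`. -/
def supId (T : ℝ) (ℓ : ℝ → ℝ) : ℝ := ⨆ r : Set.Icc (0:ℝ) T, |ℓ r - (r : ℝ)|

/-- The penalization `Φ(s,η,θ,ℓ) := ‖ℓ - I‖_∞^{2/(3p+3)} + ‖η_{s∧ℓ(·)} - ω_{t∧·}‖_{p+1}^{p+1}`. -/
def Phi (T p : ℝ) {d : ℕ} (s : ℝ) (η : ℝ → E d) (θ : Theta T d) (ℓ : ℝ → ℝ) : ℝ :=
  (supId T ℓ) ^ (2 / (3 * p + 3)) +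
    pnormPow T (p + 1) (fun r => η (min s (ℓ r)) - θ.path (min θ.t r))

/-- The regularization
`u^n(s,η) := sup { u(θ) - n Φ(s,η,θ,ℓ) : θ ∈ Θ \ {𝟎}, ℓ ∈ 𝓛_{t,s} }`. -/
def reg (T p : ℝ) {d : ℕ} (u : Theta T d → ℝ) (n : ℕ) (s : ℝ) (η : ℝ → E d) : ℝ :=
  sSup { x | ∃ θ : Theta T d, ∃ ℓ : ℝ → ℝ, (θ.t, θ.path) ≠ (0, 0) ∧ ℓ ∈ LL T θ.t s ∧
        x = u θ - (n : ℝ) * Phi T p s η θ ℓ }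

/-- A càdlàg path on `[0,T]`: right-continuous with left limits. -/
def Cadlag (T : ℝ) {d : ℕ} (η : ℝ → E d) : Prop :=
  (∀ x ∈ Set.Ico (0:ℝ) T, ContinuousWithinAt η (Set.Ici x) x) ∧
  (∀ x ∈ Set.Ioc (0:ℝ) T, ∃ l : E d, Filter.Tendsto η (nhdsWithin x (Set.Iio x)) (𝓝 l))

/-- The piecewise constant path `η^{λ_i}(x)_s = Σ_j x_j 1_{{s ≥ s_j}}`. -/
def pcPath {d i : ℕ} (sVec : Fin i → ℝ) (xVec : Fin i → E d) : ℝ → E d :=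
  fun r => ∑ j : Fin i, if sVec j ≤ r then xVec j else 0

lemma aux_pc_meas {d i : ℕ} (sVec : Fin i → ℝ) (xVec : Fin i → E d) :
    Measurable (pcPath sVec xVec) := by
  unfold pcPath
  refine Finset.measurable_sum _ fun j _ => ?_
  exact Measurable.ite measurableSet_Ici measurable_const measurable_const

lemma aux_pc_bdd {d i : ℕ} (sVec : Fin i → ℝ) (xVec : Fin i → E d) (r : ℝ) :
    ‖pcPath sVec xVec r‖ ≤ ∑ j, ‖xVec j‖ := by
  unfold pcPath
  refine (norm_sum_le _ _).trans (Finset.sum_le_sum fun j _ => ?_)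
  split_ifs <;> simp

lemma aux_pnormPow_nonneg {T : ℝ} (hT : 0 < T) (q : ℝ) {d : ℕ} (f : ℝ → E d) :
    0 ≤ pnormPow T q f := by
  unfold pnormPow
  have : 0 ≤ ∫ s in (0:ℝ)..T, ‖f s‖ ^ q :=
    intervalIntegral.integral_nonneg hT.le fun x _ => by positivity
  positivity

lemma aux_supId_nonneg (T : ℝ) (l : ℝ → ℝ) : 0 ≤ supId T l :=
  Real.iSup_nonneg fun _ => abs_nonneg _

lemma aux_Phi_nonneg {T : ℝ} (hT : 0 < T) (p : ℝ) {d : ℕ} (s : ℝ) (η : ℝ → E d)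
    (θ : Theta T d) (l : ℝ → ℝ) : 0 ≤ Phi T p s η θ l :=
  add_nonneg (Real.rpow_nonneg (aux_supId_nonneg _ _) _) (aux_pnormPow_nonneg hT _ _)

lemma aux_le_supId {T : ℝ} {l : ℝ → ℝ} (hl : MonotoneOn l (Icc 0 T)) {r : ℝ}
    (hr : r ∈ Icc 0 T) : |l r - r| ≤ supId T l := by
  unfold supId
  have hT : 0 ≤ T := hr.1.trans hr.2
  refine le_ciSup (f := fun r : Icc (0:ℝ) T => |l r - (r : ℝ)|) ?_ ⟨r, hr⟩
  refine ⟨|l 0| + |l T| + T, ?_⟩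
  rintro _ ⟨⟨x, hx⟩, rfl⟩
  have h1 := hl ⟨le_rfl, hT⟩ hx hx.1
  have h2 := hl hx ⟨hT, le_rfl⟩ hx.2
  have h3 := neg_abs_le (l 0)
  have h4 := le_abs_self (l T)
  have h5 := abs_nonneg (l 0)
  have h6 := abs_nonneg (l T)
  have := hx.1
  have := hx.2
  simp only
  rw [abs_le]
  constructor <;> linarith

/-- the cut-off factor -/
def auxPhi (a : ℝ) (k : ℕ) (r : ℝ) : ℝ :=
  max 0 (min 1 ((k:ℝ) * r)) * max 0 (min 1 (1 + (k:ℝ) * (r - a)))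

lemma auxPhi_mem (a : ℝ) (k : ℕ) (r : ℝ) : 0 ≤ auxPhi a k r ∧ auxPhi a k r ≤ 1 := by
  unfold auxPhi
  refine ⟨by positivity, ?_⟩
  refine mul_le_one₀ ?_ (by positivity) ?_ <;> simp

lemma auxPhi_cont (a : ℝ) (k : ℕ) : Continuous (auxPhi a k) := by
  unfold auxPhi; fun_prop

lemma auxPhi_ev (a r : ℝ) (hr : 0 < r) :
    ∀ᶠ k : ℕ in atTop, auxPhi a k r = if a ≤ r then 1 else 0 := by
  have h1 : ∀ᶠ k : ℕ in atTop, 1 ≤ (k:ℝ) * r :=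
    (tendsto_natCast_atTop_atTop.atTop_mul_const hr).eventually_ge_atTop 1
  split_ifs with h
  · filter_upwards [h1] with k hk
    have : 0 ≤ (k:ℝ) * (r - a) := by
      have : 0 ≤ r - a := by linarith
      positivity
    unfold auxPhi
    rw [min_eq_left hk, min_eq_left (by linarith)]
    simp
  · have h2 : ∀ᶠ k : ℕ in atTop, 1 ≤ (k:ℝ) * (a - r) :=
      (tendsto_natCast_atTop_atTop.atTop_mul_const (by linarith)).eventually_ge_atTop 1
    filter_upwards [h2] with k hk
    unfold auxPhi
    rw [max_eq_left (a := 0) (b := min 1 (1 + (k:ℝ) * (r - a)))]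
    · simp
    · exact (min_le_right _ _).trans (by linarith)

/-- approximating path -/
def auxPath {d i : ℕ} (sVec : Fin i → ℝ) (xVec : Fin i → E d) (k : ℕ) : ℝ → E d :=
  fun r => ∑ j, auxPhi (sVec j) k r • xVec j

lemma auxPath_cont {d i : ℕ} (sVec : Fin i → ℝ) (xVec : Fin i → E d) (k : ℕ) :
    Continuous (auxPath sVec xVec k) := by
  unfold auxPath
  exact continuous_finsetSum _ fun j _ => (auxPhi_cont _ _).smul continuous_const

lemma auxPath_bdd {d i : ℕ} (sVec : Fin i → ℝ) (xVec : Fin i → E d) (k : ℕ) (r : ℝ) :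
    ‖auxPath sVec xVec k r‖ ≤ ∑ j, ‖xVec j‖ := by
  unfold auxPath
  refine (norm_sum_le _ _).trans (Finset.sum_le_sum fun j _ => ?_)
  rw [norm_smul, Real.norm_of_nonneg (auxPhi_mem _ _ _).1]
  exact mul_le_of_le_one_left (norm_nonneg _) (auxPhi_mem _ _ _).2

lemma auxPath_ev {d i : ℕ} (sVec : Fin i → ℝ) (xVec : Fin i → E d) (r : ℝ) (hr : 0 < r) :
    ∀ᶠ k : ℕ in atTop, auxPath sVec xVec k r = pcPath sVec xVec r := by
  have : ∀ᶠ k : ℕ in atTop, ∀ j, auxPhi (sVec j) k r = if sVec j ≤ r then 1 else 0 :=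
    eventually_all.2 fun j => auxPhi_ev _ _ hr
  filter_upwards [this] with k hk
  unfold auxPath pcPath
  refine Finset.sum_congr rfl fun j _ => ?_
  rw [hk j]; split_ifs <;> simp

lemma aux_approx {T : ℝ} (hT : 0 < T) {p : ℝ} (hp : 1 ≤ p) {d i : ℕ} (sVec : Fin i → ℝ)
    (xVec : Fin i → E d) {s : ℝ} (hs : 0 < s) (hsT : s ≤ T) {ε : ℝ} (hε : 0 < ε) :
    ∃ θ : Theta T d, θ.t = s ∧ Phi T p s (pcPath sVec xVec) θ id < ε := by
  set B := ∑ j, ‖xVec j‖ with hB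
  have hlim : Tendsto (fun k : ℕ => pnormPow T (p+1) (fun r =>
      pcPath sVec xVec (min s r) - auxPath sVec xVec k (min s r))) atTop (𝓝 (0 + 0)) := by
    unfold pnormPow
    have hz : ∀ r, 0 < r → Tendsto (fun k : ℕ =>
        ‖pcPath sVec xVec (min s r) - auxPath sVec xVec k (min s r)‖ ^ (p+1)) atTop (𝓝 0) := by
      intro r hr
      refine tendsto_const_nhds.congr' ?_
      filter_upwards [auxPath_ev sVec xVec (min s r) (lt_min hs hr)] with k hk
      rw [hk, sub_self, norm_zero, Real.zero_rpow (by linarith)]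
    refine (hz T hT).add ?_
    have := intervalIntegral.tendsto_integral_filter_of_dominated_convergence (μ := volume)
      (a := 0) (b := T) (l := atTop) (f := fun _ => (0:ℝ)) (F := fun (k : ℕ) r =>
        ‖pcPath sVec xVec (min s r) - auxPath sVec xVec k (min s r)‖ ^ (p+1))
      (fun _ => (B + B) ^ (p+1)) ?_ ?_ ?_ ?_
    · simpa using this
    · refine Eventually.of_forall fun k => ?_
      have h1 : Measurable fun r => pcPath sVec xVec (min s r) :=
        (aux_pc_meas _ _).comp (measurable_const.min measurable_id)
      have h2 : Measurable fun r => auxPath sVec xVec k (min s r) :=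
        (auxPath_cont _ _ _).measurable.comp (measurable_const.min measurable_id)
      exact ((h1.sub h2).norm.pow_const _).aestronglyMeasurable
    · refine Eventually.of_forall fun k => Eventually.of_forall fun r _ => ?_
      rw [Real.norm_of_nonneg (by positivity)]
      refine Real.rpow_le_rpow (norm_nonneg _) ?_ (by linarith)
      exact (norm_sub_le _ _).trans (add_le_add (aux_pc_bdd _ _ _) (auxPath_bdd _ _ _ _))
    · exact intervalIntegrable_const
    · refine Eventually.of_forall fun r hr => hz r ?_
      rw [uIoc_of_le hT.le] at hr
      exact hr.1
  rw [add_zero] at hlim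
  obtain ⟨k, hk⟩ := (hlim.eventually_lt_const hε).exists
  refine ⟨⟨s, auxPath sVec xVec k, ⟨hs.le, hsT⟩, (auxPath_cont _ _ _).continuousOn, ?_⟩, rfl, ?_⟩
  · simp [auxPath, auxPhi]
  · have h0 : supId T id = 0 := by simp [supId]
    unfold Phi
    rw [h0, Real.zero_rpow (by positivity), zero_add]
    exact hk

lemma aux_reg_ge {T : ℝ} (hT : 0 < T) {p : ℝ} (hp : 1 ≤ p) {d i : ℕ} {M : ℝ}
    (u : Theta T d → ℝ) (hu : ∀ θ, |u θ| ≤ M) (n : ℕ) (hn : 1 ≤ n) (sVec : Fin i → ℝ)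
    (xVec : Fin i → E d) {s : ℝ} (hs : 0 < s) (hsT : s ≤ T) :
    -M - 1 ≤ reg T p u n s (pcPath sVec xVec) := by
  have hn0 : (0:ℝ) < n := by exact_mod_cast hn
  obtain ⟨θ, ht, hθ⟩ := aux_approx hT hp sVec xVec hs hsT (ε := 1 / n) (by positivity)
  have h1 : (n:ℝ) * Phi T p s (pcPath sVec xVec) θ id < 1 := by
    rwa [lt_div_iff₀ hn0, mul_comm] at hθ
  have h2 := (abs_le.1 (hu θ)).1
  refine le_trans ?_ (le_csSup ?_ ⟨θ, id, ?_, ?_, rfl⟩)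
  · linarith
  · refine ⟨M, ?_⟩
    rintro _ ⟨θ', l, -, -, rfl⟩
    have := (abs_le.1 (hu θ')).2
    have := mul_nonneg hn0.le (aux_Phi_nonneg hT p s (pcPath sVec xVec) θ' l)
    linarith
  · intro h
    have := congrArg Prod.fst h
    simp only at this
    linarith
  · unfold LL
    rw [if_neg hs.ne', ht]
    exact ⟨monotone_id.monotoneOn _, strictMono_id.strictMonoOn _, bijOn_id _,
      fun r _ => by simp⟩

lemma aux_integrable {T : ℝ} {q : ℝ} (hq : 0 ≤ q) {d i : ℕ} (sVec : Fin i → ℝ)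
    (xVec : Fin i → E d) (s : ℝ) (θ : Theta T d) {l : ℝ → ℝ} (hl : MonotoneOn l (Icc 0 T)) :
    IntegrableOn (fun r => ‖pcPath sVec xVec (min s (l r)) - θ.path (min θ.t r)‖ ^ q)
      (Icc 0 T) := by
  have hmaps : MapsTo (fun r => min θ.t r) (Icc 0 T) (Icc 0 T) := fun r hr =>
    ⟨le_min θ.ht.1 hr.1, (min_le_right _ _).trans hr.2⟩
  have hc : ContinuousOn (fun r => θ.path (min θ.t r)) (Icc 0 T) :=
    θ.cont.comp (by fun_prop) hmaps
  obtain ⟨B, hB⟩ := isCompact_Icc.exists_bound_of_continuousOn hc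
  have hlm : AEMeasurable l (volume.restrict (Icc 0 T)) :=
    aemeasurable_restrict_of_monotoneOn measurableSet_Icc hl
  have h1 : AEMeasurable (fun r => pcPath sVec xVec (min s (l r)))
      (volume.restrict (Icc 0 T)) :=
    (aux_pc_meas sVec xVec).comp_aemeasurable (aemeasurable_const.min hlm)
  have h2 : AEMeasurable (fun r => θ.path (min θ.t r)) (volume.restrict (Icc 0 T)) :=
    hc.aemeasurable measurableSet_Icc
  refine Integrable.of_bound ((h1.sub h2).norm.pow_const _).aestronglyMeasurable
    ((∑ j, ‖xVec j‖ + B) ^ q) ?_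
  refine (ae_restrict_mem measurableSet_Icc).mono fun r hr => ?_
  rw [Real.norm_of_nonneg (by positivity)]
  refine Real.rpow_le_rpow (norm_nonneg _) ?_ hq
  exact (norm_sub_le _ _).trans (add_le_add (aux_pc_bdd _ _ _) (hB r hr))

lemma aux_holder {a b : ℝ} (hab : a ≤ b) {p : ℝ} (hp : 1 ≤ p) {g : ℝ → ℝ}
    (hg : ContinuousOn g (Icc a b)) (hg0 : ∀ x, 0 ≤ g x) :
    (∫ x in a..b, g x ^ p) ≤
      (∫ x in a..b, g x ^ (p + 1)) ^ (p / (p + 1)) * (b - a) ^ (1 / (p + 1)) := by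
  have hp0 : 0 < p := by linarith
  have hH : ((p + 1) / p).HolderConjugate (p + 1) := by
    rw [Real.holderConjugate_iff]
    constructor
    · rw [lt_div_iff₀ hp0]; linarith
    · field_simp
  have hgp : ContinuousOn (fun x => g x ^ p) (Icc a b) :=
    hg.rpow_const fun x _ => Or.inr hp0.le
  obtain ⟨B, hB⟩ := isCompact_Icc.exists_bound_of_continuousOn hgp
  have hm : MemLp (fun x => g x ^ p) (ENNReal.ofReal ((p + 1) / p))
      (volume.restrict (Ioc a b)) := by
    refine MemLp.of_bound ?_ B ?_
    · exact (hgp.mono Ioc_subset_Icc_self).aestronglyMeasurable measurableSet_Ioc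
    · exact (ae_restrict_mem measurableSet_Ioc).mono fun x hx => hB x (Ioc_subset_Icc_self hx)
  have := integral_mul_le_Lp_mul_Lq_of_nonneg (μ := volume.restrict (Ioc a b)) hH
    (f := fun x => g x ^ p) (g := fun _ => 1)
    (Eventually.of_forall fun x => Real.rpow_nonneg (hg0 x) _)
    (Eventually.of_forall fun x => zero_le_one) hm (memLp_const _)
  rw [intervalIntegral.integral_of_le hab, intervalIntegral.integral_of_le hab]
  have e : ∀ x, (g x ^ p) ^ ((p + 1) / p) = g x ^ (p + 1) := fun x => by
    rw [← Real.rpow_mul (hg0 x)]; congr 1; field_simp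
  simp only [mul_one, e, Real.one_rpow, one_div_div] at this
  simpa [hab] using this

/-- (Estimates (5.27) and (5.28)) For a 1-optimal `(θ̃, ℓ̃)` in the definition of
`u^n(s, η^{λ_i}(x))` with `s ≥ s_i`, `s > 0`, and `r₀ = ℓ̃^{-1}(s_i)` (characterized
by `r₀ ∈ [0, t̃]` and `ℓ̃(r₀) = s_i`):
`|t̃ - r₀| ≤ C n^{-(3p+3)/2} + |s - s_i|` and
`∫_{r₀}^{t̃} |x_i·1 - ω̃_t|^p dt ≤ C n^{-p/(p+1)} (n^{-(3p+3)/2} + |s - s_i|)^{1/(p+1)}`,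
where `C > 0` depends only on `T`, `p` and the bound `M` on `u`. -/
theorem stmt11 (T : ℝ) (hT : 0 < T) (d : ℕ) (hd : 1 ≤ d) (p : ℝ) (hp : 1 ≤ p) (M : ℝ) :
    ∃ C > 0, ∀ u : Theta T d → ℝ, (∀ θ : Theta T d, |u θ| ≤ M) →
    ∀ n : ℕ, 1 ≤ n →
    ∀ (m : ℕ) (sVec : Fin (m + 1) → ℝ) (xVec : Fin (m + 1) → E d),
      sVec 0 = 0 → StrictMono sVec → sVec (Fin.last m) ≤ T →
    ∀ s : ℝ, sVec (Fin.last m) ≤ s → s ≤ T → 0 < s →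
    ∀ (θtil : Theta T d) (ℓtil : ℝ → ℝ),
      (θtil.t, θtil.path) ≠ (0, 0) → ℓtil ∈ LL T θtil.t s →
      -- 1-optimality of `(θ̃, ℓ̃)`
      reg T p u n s (pcPath sVec xVec) - u θtil
          + (n : ℝ) * Phi T p s (pcPath sVec xVec) θtil ℓtil < 1 →
    ∀ r₀ ∈ Set.Icc (0:ℝ) θtil.t, ℓtil r₀ = sVec (Fin.last m) →
      |θtil.t - r₀| ≤ C * (n : ℝ) ^ (-((3 * p + 3) / 2)) + |s - sVec (Fin.last m)| ∧
      (∫ t in r₀..θtil.t, ‖(∑ j, xVec j) - θtil.path t‖ ^ p) ≤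
        C * (n : ℝ) ^ (-(p / (p + 1)))
          * ((n : ℝ) ^ (-((3 * p + 3) / 2)) + |s - sVec (Fin.last m)|) ^ (1 / (p + 1)) := by
  set K : ℝ := 2 * max M 0 + 2 with hK
  have hK0 : 0 < K := by positivity
  set C1 : ℝ := 2 * K ^ ((3 * p + 3) / 2) + 1 with hC1
  have hC10 : 1 ≤ C1 := by
    have : 0 < K ^ ((3 * p + 3) / 2) := by positivity
    linarith
  refine ⟨C1 + K ^ (p / (p + 1)) * C1 ^ (1 / (p + 1)), by positivity, ?_⟩
  intro u hu n hn m sVec xVec hs0 hsm hsl s hsi hsT hs θ l hne hl hopt r₀ hr₀ hlr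
  have hn0 : (0:ℝ) < n := by exact_mod_cast hn
  unfold LL at hl
  rw [if_neg hs.ne'] at hl
  obtain ⟨hmono, hstrict, hbij, -⟩ := hl
  have hreg := aux_reg_ge hT hp u hu n hn sVec xVec hs hsT
  have hPhi : Phi T p s (pcPath sVec xVec) θ l ≤ K / n := by
    rw [le_div_iff₀ hn0]
    have h1 := (abs_le.1 (hu θ)).2
    have h2 := le_max_left M 0
    nlinarith
  have hpn := aux_pnormPow_nonneg hT (p + 1)
    (fun r => pcPath sVec xVec (min s (l r)) - θ.path (min θ.t r))
  have hsn := aux_supId_nonneg T l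
  have hsup : supId T l ^ (2 / (3 * p + 3)) ≤ K / n := by
    unfold Phi at hPhi; linarith
  have hpow : pnormPow T (p + 1)
      (fun r => pcPath sVec xVec (min s (l r)) - θ.path (min θ.t r)) ≤ K / n := by
    have := Real.rpow_nonneg hsn (2 / (3 * p + 3))
    unfold Phi at hPhi; linarith
  have hint : (∫ r in (0:ℝ)..T,
      ‖pcPath sVec xVec (min s (l r)) - θ.path (min θ.t r)‖ ^ (p + 1)) ≤ K / n := by
    refine le_trans ?_ hpow
    unfold pnormPow
    exact le_add_of_nonneg_left (by positivity)
  set N : ℝ := (n : ℝ) ^ (-((3 * p + 3) / 2)) with hN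
  have hN0 : 0 < N := by positivity
  have hsup2 : supId T l ≤ K ^ ((3 * p + 3) / 2) * N := by
    have h := Real.rpow_le_rpow (Real.rpow_nonneg hsn _) hsup
      (show 0 ≤ (3 * p + 3) / 2 by positivity)
    rw [← Real.rpow_mul hsn, show 2 / (3 * p + 3) * ((3 * p + 3) / 2) = 1 by field_simp,
      Real.rpow_one, Real.div_rpow hK0.le hn0.le] at h
    rwa [hN, Real.rpow_neg hn0.le, ← div_eq_mul_inv]
  have ht0 := θ.ht.1
  have htT := θ.ht.2
  have hlt : l θ.t = s := by
    obtain ⟨x, hx, hxs⟩ := hbij.surjOn (show s ∈ Icc 0 s from ⟨hs.le, le_rfl⟩)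
    have h1 := (hbij.mapsTo (show θ.t ∈ Icc 0 θ.t from ⟨ht0, le_rfl⟩)).2
    have h2 := hstrict.monotoneOn hx (show θ.t ∈ Icc 0 θ.t from ⟨ht0, le_rfl⟩) hx.2
    linarith
  have hd1 : |θ.t - r₀| ≤ 2 * supId T l + |s - sVec (Fin.last m)| := by
    have h1 := aux_le_supId hmono θ.ht
    have h2 := aux_le_supId hmono (r := r₀) ⟨hr₀.1, hr₀.2.trans htT⟩
    rw [hlt] at h1
    rw [hlr] at h2
    rw [abs_le] at h1 h2
    have h3 := le_abs_self (s - sVec (Fin.last m))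
    have h4 := neg_abs_le (s - sVec (Fin.last m))
    rw [abs_le]
    constructor <;> linarith
  set A := |s - sVec (Fin.last m)| with hA
  have hA0 : 0 ≤ A := abs_nonneg _
  have hd2 : |θ.t - r₀| ≤ C1 * N + A := by
    refine hd1.trans ?_
    rw [hC1]; nlinarith
  have hX0 : 0 ≤ K ^ (p / (p + 1)) * C1 ^ (1 / (p + 1)) := by positivity
  refine ⟨hd2.trans (by nlinarith), ?_⟩
  have hsub : Icc r₀ θ.t ⊆ Icc 0 T := Icc_subset_Icc hr₀.1 htT
  have hgc : ContinuousOn (fun t => ‖(∑ j, xVec j) - θ.path t‖) (Icc r₀ θ.t) :=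
    (continuousOn_const.sub (θ.cont.mono hsub)).norm
  refine (aux_holder hr₀.2 hp hgc fun x => norm_nonneg _).trans ?_
  have hI : (∫ x in r₀..θ.t, ‖(∑ j, xVec j) - θ.path x‖ ^ (p + 1)) ≤ K / n := by
    refine le_trans (le_of_eq ?_) ((intervalIntegral.integral_mono_interval hr₀.1 hr₀.2 htT
      (Eventually.of_forall fun x => ?_) ?_).trans hint)
    · refine intervalIntegral.integral_congr fun x hx => ?_
      rw [uIcc_of_le hr₀.2] at hx
      have hx' : x ∈ Icc 0 θ.t := ⟨hr₀.1.trans hx.1, hx.2⟩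
      have h1 : l x ≤ s := (hbij.mapsTo hx').2
      have h2 : sVec (Fin.last m) ≤ l x := by
        rw [← hlr]; exact hstrict.monotoneOn hr₀ hx' hx.1
      rw [min_eq_right h1, min_eq_right hx.2]
      congr 3
      unfold pcPath
      refine Finset.sum_congr rfl fun j _ => ?_
      rw [if_pos ((hsm.monotone (Fin.le_last j)).trans h2)]
    · positivity
    · rw [intervalIntegrable_iff_integrableOn_Icc_of_le hT.le]
      exact aux_integrable (by linarith) sVec xVec s θ hmono
  have hI0 : 0 ≤ ∫ x in r₀..θ.t, ‖(∑ j, xVec j) - θ.path x‖ ^ (p + 1) :=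
    intervalIntegral.integral_nonneg hr₀.2 fun x _ => by positivity
  have hb1 : (∫ x in r₀..θ.t, ‖(∑ j, xVec j) - θ.path x‖ ^ (p + 1)) ^ (p / (p + 1)) ≤
      K ^ (p / (p + 1)) * (n : ℝ) ^ (-(p / (p + 1))) := by
    refine (Real.rpow_le_rpow hI0 hI (by positivity)).trans (le_of_eq ?_)
    rw [Real.div_rpow hK0.le hn0.le, Real.rpow_neg hn0.le, div_eq_mul_inv]
  have hb2 : (θ.t - r₀) ^ (1 / (p + 1)) ≤ C1 ^ (1 / (p + 1)) * (N + A) ^ (1 / (p + 1)) := by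
    rw [← Real.mul_rpow (by positivity) (by positivity)]
    refine Real.rpow_le_rpow (by linarith [hr₀.2]) ?_ (by positivity)
    have := (le_abs_self _).trans hd2
    nlinarith
  calc _ ≤ (K ^ (p / (p + 1)) * (n : ℝ) ^ (-(p / (p + 1)))) *
        (C1 ^ (1 / (p + 1)) * (N + A) ^ (1 / (p + 1))) :=
        mul_le_mul hb1 hb2 (Real.rpow_nonneg (by linarith [hr₀.2]) _) (by positivity)
    _ = (K ^ (p / (p + 1)) * C1 ^ (1 / (p + 1))) * (n : ℝ) ^ (-(p / (p + 1))) *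
        (N + A) ^ (1 / (p + 1)) := by ring
    _ ≤ _ := by
        gcongr
        linarith
end
end

section
/- (Inequality (⋆)) For every odd integer p > 1 there exists a constant C ≥ 0, depending only on p, such that for all a, b ∈ ℝ^d: |a + b|^{p+1} ≤ |a|^{p+1} + (p+1)(a·b)|a|^{p−1} + C|b|^2(|b|^{p−1} + |a|^{p−1}). -/
noncomputable section

lemma aux_cheb (n : ℕ) (X Y : ℝ) (hX : 0 ≤ X) (hY : 0 ≤ Y) :
    X * Y ^ n + Y * X ^ n ≤ X ^ (n+1) + Y ^ (n+1) := by
  have h : 0 ≤ (X - Y) * (X ^ n - Y ^ n) := by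
    rcases le_total X Y with h | h
    · exact mul_nonneg_of_nonpos_of_nonpos (by linarith)
        (by linarith [pow_le_pow_left₀ hX h n])
    · exact mul_nonneg (by linarith) (by linarith [pow_le_pow_left₀ hY h n])
  rw [pow_succ, pow_succ]
  linarith

lemma aux_main (n : ℕ) : ∃ C : ℝ, 0 ≤ C ∧ ∀ X Y s : ℝ, 0 ≤ X → 0 ≤ Y → s ^ 2 ≤ X * Y →
    0 ≤ X + 2 * s + Y → 2 * s ≤ X + Y →
    (X + 2 * s + Y) ^ (n+1) ≤ X ^ (n+1) + 2 * (n+1) * s * X ^ n + C * Y * (Y ^ n + X ^ n) := by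
  induction n with
  | zero =>
    refine ⟨1, by norm_num, ?_⟩
    intro X Y s hX hY _ _ _
    norm_num
    linarith
  | succ n ih =>
    obtain ⟨C, hC, ih⟩ := ih
    refine ⟨1 + 6 * (n+1) + 4 * C, by positivity, ?_⟩
    intro X Y s hX hY hs hQ h2
    have h := mul_le_mul_of_nonneg_right (ih X Y s hX hY hs hQ h2) hQ
    have hch := aux_cheb n X Y hX hY
    have hn : (0:ℝ) ≤ n + 1 := by positivity
    have hXn : 0 ≤ X ^ n := by positivity
    have hYn : 0 ≤ Y ^ n := by positivity
    have hY1 : 0 ≤ Y ^ (n+1) := by positivity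
    have e1 : 4 * (n+1) * X ^ n * s ^ 2 ≤ 4 * (n+1) * X ^ n * (X * Y) :=
      mul_le_mul_of_nonneg_left hs (by positivity)
    have e2 : (n+1) * Y * X ^ n * (2 * s) ≤ (n+1) * Y * X ^ n * (X + Y) :=
      mul_le_mul_of_nonneg_left h2 (by positivity)
    have e3 : C * Y * (Y ^ n + X ^ n) * (X + 2 * s + Y)
        ≤ C * Y * (Y ^ n + X ^ n) * (2 * (X + Y)) :=
      mul_le_mul_of_nonneg_left (by linarith) (by positivity)
    have e4 : (2 * C * Y) * (X * Y ^ n + Y * X ^ n) ≤ (2 * C * Y) * (X ^ (n+1) + Y ^ (n+1)) :=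
      mul_le_mul_of_nonneg_left hch (by positivity)
    have hXY : 0 ≤ X * Y ^ n := by positivity
    have e5 : ((n+1) * Y) * (Y * X ^ n) ≤ ((n+1) * Y) * (X ^ (n+1) + Y ^ (n+1)) :=
      mul_le_mul_of_nonneg_left (by linarith) (by positivity)
    have e6 : 0 ≤ (1 + 5 * ((n:ℝ)+1)) * Y * Y ^ (n+1) := by positivity
    rw [pow_succ (X + 2 * s + Y) (n+1)]
    refine h.trans ?_
    push_cast
    simp only [pow_succ] at *
    linarith

/-- (Inequality (⋆)) For every odd integer `p > 1` there is `C ≥ 0`, depending only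
on `p`, such that for all `a, b ∈ ℝ^d`:
`|a+b|^{p+1} ≤ |a|^{p+1} + (p+1)(a·b)|a|^{p-1} + C|b|^2(|b|^{p-1} + |a|^{p-1})`. -/
theorem stmt12 (p : ℕ) (hodd : Odd p) (hp : 1 < p) :
    ∃ C : ℝ, 0 ≤ C ∧ ∀ (d : ℕ) (a b : EuclideanSpace ℝ (Fin d)),
      ‖a + b‖ ^ (p + 1) ≤
        ‖a‖ ^ (p + 1) + ((p : ℝ) + 1) * (inner ℝ a b : ℝ) * ‖a‖ ^ (p - 1)
          + C * ‖b‖ ^ 2 * (‖b‖ ^ (p - 1) + ‖a‖ ^ (p - 1)) := by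
  obtain ⟨k, rfl⟩ := hodd
  obtain ⟨C, hC, h⟩ := aux_main k
  refine ⟨C, hC, fun d a b => ?_⟩
  have hadd := norm_add_sq_real a b
  have hsub := norm_sub_sq_real a b
  have hcs : (inner ℝ a b : ℝ) ^ 2 ≤ ‖a‖ ^ 2 * ‖b‖ ^ 2 := by
    rw [← mul_pow]
    exact sq_le_sq.2 ((abs_real_inner_le_norm a b).trans (le_abs_self _))
  have := h (‖a‖ ^ 2) (‖b‖ ^ 2) (inner ℝ a b) (by positivity) (by positivity) hcs
    (by rw [← hadd]; positivity) (by nlinarith [sq_nonneg ‖a - b‖])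
  rw [← hadd] at this
  simp only [← pow_mul] at this
  have e : 2 * k + 1 + 1 = 2 * (k + 1) := by ring
  have e' : 2 * k + 1 - 1 = 2 * k := by omega
  rw [e, e']
  push_cast
  linarith
end
end

section
/- (Time-change indicator estimate) Let T > 0, δ ≥ 0, and let ℓ : [0,T] → ℝ be nondecreasing with |ℓ(t) − t| ≤ δ for all t ∈ [0,T]. Then for every s ∈ ℝ, the Lebesgue measure of the set {t ∈ [0,T] : 1_{{t ≥ s}} ≠ 1_{{ℓ(t) ≥ s}}} is at most δ; equivalently, ∫_0^T |1_{{t ≥ s}} − 1_{{ℓ(t) ≥ s}}| dt ≤ δ. -/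
open MeasureTheory Set

noncomputable section

/-- (Time-change indicator estimate) If `ℓ : [0,T] → ℝ` is nondecreasing with
`|ℓ(t) - t| ≤ δ` on `[0,T]`, then for every `s` the set where the indicators
`1_{{t ≥ s}}` and `1_{{ℓ(t) ≥ s}}` differ has Lebesgue measure at most `δ`;
equivalently `∫_0^T |1_{{t ≥ s}} - 1_{{ℓ(t) ≥ s}}| dt ≤ δ`. -/
theorem stmt14 (T : ℝ) (hT : 0 < T) (δ : ℝ) (hδ : 0 ≤ δ) (ℓ : ℝ → ℝ)
    (hmono : MonotoneOn ℓ (Set.Icc 0 T))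
    (hclose : ∀ t ∈ Set.Icc (0:ℝ) T, |ℓ t - t| ≤ δ) (s : ℝ) :
    volume {t ∈ Set.Icc (0:ℝ) T |
        (if s ≤ t then (1:ℝ) else 0) ≠ (if s ≤ ℓ t then (1:ℝ) else 0)} ≤
      ENNReal.ofReal δ ∧
    (∫ t in (0:ℝ)..T, |(if s ≤ t then (1:ℝ) else 0) - (if s ≤ ℓ t then (1:ℝ) else 0)|) ≤ δ := by
  have key : ∃ a : ℝ, ∀ t ∈ Set.Icc (0:ℝ) T,
      (if s ≤ t then (1:ℝ) else 0) ≠ (if s ≤ ℓ t then (1:ℝ) else 0) → t ∈ Set.Icc a (a + δ) := by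
    by_cases h : ∃ u ∈ Set.Icc (0:ℝ) T, s ≤ u ∧ ℓ u < s
    · obtain ⟨u, hu, hsu, hlu⟩ := h
      refine ⟨s, fun t ht hne => ?_⟩
      have h1 := abs_le.1 (hclose t ht)
      by_cases hst : s ≤ t <;> by_cases hlt : s ≤ ℓ t
      · simp [hst, hlt] at hne
      · push Not at hlt
        exact ⟨hst, by linarith⟩
      · push Not at hst
        have := hmono ht hu (by linarith)
        linarith
      · simp [hst, hlt] at hne
    · push Not at h
      refine ⟨s - δ, fun t ht hne => ?_⟩
      have h1 := abs_le.1 (hclose t ht)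
      by_cases hst : s ≤ t
      · have hlt := h t ht hst
        simp [hst, hlt] at hne
      · by_cases hlt : s ≤ ℓ t
        · push Not at hst
          exact ⟨by linarith, by linarith⟩
        · simp [hst, hlt] at hne
  obtain ⟨a, ha⟩ := key
  constructor
  · refine (measure_mono (t := Set.Icc a (a + δ)) fun t ht => ha t ht.1 ht.2).trans ?_
    rw [Real.volume_Icc]
    simp
  · rw [intervalIntegral.integral_of_le hT.le]
    have hg : Integrable ((Set.Icc a (a + δ)).indicator (fun _ : ℝ => (1:ℝ))) volume :=
      (integrable_indicator_iff measurableSet_Icc).2 (by simp [IntegrableOn])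
    calc _ ≤ ∫ t in Set.Ioc 0 T, (Set.Icc a (a + δ)).indicator (fun _ : ℝ => (1:ℝ)) t := by
          refine integral_mono_of_nonneg (ae_of_all _ fun t => abs_nonneg _) hg.integrableOn ?_
          refine (ae_restrict_iff' measurableSet_Ioc).2 (ae_of_all _ fun t ht => ?_)
          have hat := ha t ⟨ht.1.le, ht.2⟩
          by_cases hm : t ∈ Set.Icc a (a + δ)
          · simp only [Set.indicator_of_mem hm]
            split_ifs <;> norm_num
          · have := not_not.1 (mt hat hm)
            simp only [this, Set.indicator_of_notMem hm]
            simp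
      _ ≤ ∫ t, (Set.Icc a (a + δ)).indicator (fun _ : ℝ => (1:ℝ)) t :=
          setIntegral_le_integral hg (ae_of_all _ fun t =>
            Set.indicator_nonneg (fun _ _ => zero_le_one) t)
      _ = δ := by
          rw [integral_indicator measurableSet_Icc]
          simp [hδ]
end
end

section
/- (Piecewise-constant time-change L^p estimate) Let T > 0, p ≥ 1, δ ≥ 0, let 0 ≤ s_1 < ⋯ < s_i ≤ T and x_1, …, x_i ∈ ℝ^d, and let ℓ : [0,T] → ℝ be nondecreasing with sup_{t∈[0,T]} |ℓ(t) − t| ≤ δ. Then ∫_0^T | Σ_{j=1}^i x_j ( 1_{{t ≥ s_j}} − 1_{{ℓ(t) ≥ s_j}} ) |^p dt ≤ i^p |x_i|_p^p δ, where |x_i|_p^p := Σ_{j=1}^i |x_j|^p. -/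
open MeasureTheory Set

noncomputable section

/-- (Piecewise-constant time-change `L^p` estimate) For `0 ≤ s_1 < ⋯ < s_i ≤ T`,
`x_1,…,x_i ∈ ℝ^d`, and a nondecreasing `ℓ : [0,T] → ℝ` with `sup |ℓ - I| ≤ δ`:
`∫_0^T |Σ_j x_j (1_{{t ≥ s_j}} - 1_{{ℓ(t) ≥ s_j}})|^p dt ≤ i^p |x_i|_p^p δ`. -/
theorem stmt15 (T : ℝ) (hT : 0 < T) (p : ℝ) (hp : 1 ≤ p) (d : ℕ) (hd : 1 ≤ d)
    (δ : ℝ) (hδ : 0 ≤ δ) (i : ℕ) (hi : 1 ≤ i)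
    (sVec : Fin i → ℝ) (xVec : Fin i → E d)
    (hsmono : StrictMono sVec) (hsIcc : ∀ j, sVec j ∈ Set.Icc (0:ℝ) T)
    (ℓ : ℝ → ℝ) (hmono : MonotoneOn ℓ (Set.Icc 0 T))
    (hclose : ∀ t ∈ Set.Icc (0:ℝ) T, |ℓ t - t| ≤ δ) :
    (∫ t in (0:ℝ)..T,
        ‖∑ j, ((if sVec j ≤ t then (1:ℝ) else 0) - (if sVec j ≤ ℓ t then (1:ℝ) else 0))
            • xVec j‖ ^ p) ≤
      (i : ℝ) ^ p * (∑ j, ‖xVec j‖ ^ p) * δ := by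
  have key : ∀ j, ∃ a : ℝ, ∀ t ∈ Set.Icc (0:ℝ) T,
      |(if sVec j ≤ t then (1:ℝ) else 0) - (if sVec j ≤ ℓ t then (1:ℝ) else 0)| ≤
        (Set.Ico a (a + δ)).indicator (fun _ => (1:ℝ)) t := by
    intro j
    by_cases h : ∃ u ∈ Set.Icc (0:ℝ) T, u < sVec j ∧ sVec j ≤ ℓ u
    · obtain ⟨u, hu, h1, h2⟩ := h
      refine ⟨sVec j - δ, fun t ht => ?_⟩
      have hc := abs_le.1 (hclose t ht)
      have hn : (0:ℝ) ≤ (Set.Ico (sVec j - δ) (sVec j - δ + δ)).indicator (fun _ => (1:ℝ)) t :=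
        Set.indicator_nonneg (fun _ _ => zero_le_one) _
      by_cases h3 : sVec j ≤ t
      · have := hmono hu ht (h1.le.trans h3)
        simpa [h3, h2.trans this] using hn
      · by_cases h4 : sVec j ≤ ℓ t
        · rw [Set.indicator_of_mem (by constructor <;> linarith)]
          simp [h3, h4]
        · simpa [h3, h4] using hn
    · push Not at h
      refine ⟨sVec j, fun t ht => ?_⟩
      have hc := abs_le.1 (hclose t ht)
      have hn : (0:ℝ) ≤ (Set.Ico (sVec j) (sVec j + δ)).indicator (fun _ => (1:ℝ)) t :=
        Set.indicator_nonneg (fun _ _ => zero_le_one) _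
      by_cases h3 : sVec j ≤ t
      · by_cases h4 : sVec j ≤ ℓ t
        · simpa [h3, h4] using hn
        · rw [Set.indicator_of_mem (by constructor <;> linarith)]
          simp [h3, h4]
      · have := h t ht (not_le.1 h3)
        simpa [h3, not_le.2 this] using hn
  choose a ha using key
  have hi1 : (1:ℝ) ≤ i := by exact_mod_cast hi
  have hp0 : 0 < p := by linarith
  have hint : ∀ j, Integrable (fun t => (i:ℝ) ^ p * ‖xVec j‖ ^ p *
      (Set.Ico (a j) (a j + δ)).indicator (fun _ => (1:ℝ)) t) := fun j =>
    ((integrable_indicator_iff measurableSet_Ico).2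
      (integrableOn_const (by simp))).const_mul _
  have hsum := integrable_finset_sum Finset.univ (fun j _ => hint j)
  rw [intervalIntegral.integral_of_le hT.le]
  calc _ ≤ ∫ t in Set.Ioc 0 T, ∑ j, (i:ℝ) ^ p * ‖xVec j‖ ^ p *
      (Set.Ico (a j) (a j + δ)).indicator (fun _ => (1:ℝ)) t := by
        apply integral_mono_of_nonneg
        · exact Filter.Eventually.of_forall fun t => by positivity
        · exact hsum.integrableOn
        · refine (ae_restrict_iff' measurableSet_Ioc).2 (Filter.Eventually.of_forall fun t ht => ?_)
          have ht' := Set.Ioc_subset_Icc_self ht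
          set I : Fin i → ℝ := fun j => (Set.Ico (a j) (a j + δ)).indicator (fun _ => (1:ℝ)) t
            with hI
          have hI0 : ∀ j, 0 ≤ I j := fun j => Set.indicator_nonneg (fun _ _ => zero_le_one) _
          have hI1 : ∀ j, I j = 0 ∨ I j = 1 := fun j => by
            simp only [hI, Set.indicator_apply]; split_ifs <;> simp
          have h1 : ‖∑ j, ((if sVec j ≤ t then (1:ℝ) else 0) -
              (if sVec j ≤ ℓ t then (1:ℝ) else 0)) • xVec j‖ ≤ ∑ j, |I j * ‖xVec j‖| := by
            refine (norm_sum_le _ _).trans (Finset.sum_le_sum fun j _ => ?_)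
            rw [norm_smul, abs_of_nonneg (mul_nonneg (hI0 j) (norm_nonneg _))]
            exact mul_le_mul_of_nonneg_right (ha j t ht') (norm_nonneg _)
          have h2 := Real.rpow_sum_le_const_mul_sum_rpow Finset.univ
            (fun j => I j * ‖xVec j‖) hp
          have h3 := (Real.rpow_le_rpow (norm_nonneg _) h1 hp0.le).trans h2
          refine h3.trans ?_
          rw [Finset.mul_sum]
          refine Finset.sum_le_sum fun j _ => ?_
          have h4 : (i:ℝ) ^ (p - 1) ≤ (i:ℝ) ^ p :=
            Real.rpow_le_rpow_of_exponent_le hi1 (by linarith)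
          change _ ≤ (i:ℝ) ^ p * ‖xVec j‖ ^ p * I j
          simp only [Finset.card_univ, Fintype.card_fin]
          rcases hI1 j with h | h
          · simp [h, Real.zero_rpow hp0.ne']
          · simp only [h, one_mul, mul_one, abs_norm]
            exact mul_le_mul_of_nonneg_right h4 (by positivity)
    _ ≤ ∫ t, ∑ j, (i:ℝ) ^ p * ‖xVec j‖ ^ p *
      (Set.Ico (a j) (a j + δ)).indicator (fun _ => (1:ℝ)) t := by
        refine setIntegral_le_integral hsum (Filter.Eventually.of_forall fun t => ?_)
        exact Finset.sum_nonneg fun j _ => mul_nonneg (by positivity)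
          (Set.indicator_nonneg (fun _ _ => zero_le_one) _)
    _ = _ := by
        rw [integral_finset_sum _ (fun j _ => hint j), Finset.mul_sum, Finset.sum_mul]
        refine Finset.sum_congr rfl fun j _ => ?_
        rw [integral_const_mul, integral_indicator measurableSet_Ico]
        simp [hδ]
end
end
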